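/- arXiv:2402.15167 — 2 statements merged into one kernel-verified Lean document; each statement's English description precedes it below -/
import Mathlib

section
/- Fix integers N ≥ 2, d ≥ 1 and let K be any integer with K ≥ dN + 1. There exist vectors y_1, …, y_K ∈ ℝ^d such that the intersection of the zero sets of the functions f̃_{y_1}, …, f̃_{y_K} equals exactly the intrinsic zero set Ω; that is, ⋂_{k=1}^{K} {X ∈ (ℝ^d)^N : f̃_{y_k}(X) = 0} = Ω. -/
/-! The condition `y_k ⬝ (X_i − X_j) = 0` is linear in `X`, so for a fixed choice of one pair
`(i, j)` for each `k` the solutions form a subspace of the space of configurations. Choose the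
vectors one after the other, keeping track of the finitely many subspaces that arise from all
choices of pairs. Over an infinite field, the next vector can be chosen so that it strictly cuts
down each of these subspaces for each pair `(i, j)`, except where `X_i = X_j` already holds on the
whole subspace, which then lies in `Ω`. Up to translation the configurations form a space of
dimension `d(N − 1)`, so after that many steps each subspace lies in `Ω` or is zero, and `0 ∈ Ω`. -/

open Finset in
/-- `f̃_y(X) = ∏_{i<j} yᵀ(X_i − X_j)`. -/
noncomputable def ftilde (N d : ℕ) (y : Fin d → ℝ) (X : Fin N → Fin d → ℝ) : ℝ :=
  ∏ i : Fin N, ∏ j ∈ Finset.Ioi i, (∑ l : Fin d, y l * (X i l - X j l))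

/-- The intrinsic zero set `Ω`. -/
def intrinsicZero (N d : ℕ) : Set (Fin N → Fin d → ℝ) :=
  {X | ∃ i j : Fin N, i ≠ j ∧ X i = X j}

open Function Module Set

section LinearFamily

variable {F V W S : Type*} [Field F] [Infinite F] [AddCommGroup V] [Module F V]
  [FiniteDimensional F V] [AddCommGroup W] [Module F W] [Finite S]

lemma exists_dual_forall_finrank_inf_ker_comp_lt (L : S → V →ₗ[F] W)
    {𝒰 : Set (Submodule F V)} (h𝒰 : 𝒰.Finite) :
    ∃ f : Dual F W, ∀ U ∈ 𝒰, ∀ s, ¬ U ≤ LinearMap.ker (L s) →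
      finrank F ↥(U ⊓ LinearMap.ker (f ∘ₗ L s)) < finrank F U := by
  have := h𝒰.to_subtype
  let ι := {p : 𝒰 × S // ¬ (p.1 : Submodule F V) ≤ LinearMap.ker (L p.2)}
  choose v hvU hv using fun p : ι => SetLike.not_le_iff_exists.1 p.2
  obtain ⟨f, hf⟩ := exists_dual_forall_apply_ne_zero (K := F) (fun p : ι => L p.1.2 (v p)) hv
  refine ⟨f, fun U hU s hUs => Submodule.finrank_lt_finrank_of_lt (inf_lt_left.2 fun hle => ?_)⟩
  let p : ι := ⟨(⟨U, hU⟩, s), hUs⟩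
  exact hf p (hle (hvU p))

lemma exists_dual_forall_mem_exists_apply_eq_zero [Nonempty S] (L : S → V →ₗ[F] W) {K : ℕ}
    {𝒰 : Set (Submodule F V)} (h𝒰 : 𝒰.Finite) (hdim : ∀ U ∈ 𝒰, finrank F U ≤ K) :
    ∃ y : Fin K → Dual F W, ∀ U ∈ 𝒰, ∀ x ∈ U,
      (∀ k, ∃ s, y k (L s x) = 0) → ∃ s, L s x = 0 := by
  induction K generalizing 𝒰 with
  | zero =>
    refine ⟨Fin.elim0, fun U hU x hx _ => ⟨Classical.arbitrary S, ?_⟩⟩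
    have hU_bot : U = ⊥ := Submodule.finrank_eq_zero.1 (Nat.le_zero.1 (hdim U hU))
    have hx_zero : x = 0 := by simpa [hU_bot] using hx
    rw [hx_zero, map_zero]
  | succ K ih =>
    obtain ⟨f, hf⟩ := exists_dual_forall_finrank_inf_ker_comp_lt L h𝒰
    let 𝒰' : Set (Submodule F V) :=
      {U' ∈ image2 (fun U s => U ⊓ LinearMap.ker (f ∘ₗ L s)) 𝒰 univ | finrank F U' ≤ K}
    obtain ⟨y, hy⟩ := ih (𝒰 := 𝒰') ((h𝒰.image2 _ finite_univ).sep _) fun U' hU' => hU'.2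
    refine ⟨Fin.cons f y, fun U hU x hx hzero => ?_⟩
    obtain ⟨s, hs⟩ := hzero 0
    by_cases hUs : U ≤ LinearMap.ker (L s)
    · exact ⟨s, hUs hx⟩
    · have hlt := (hf U hU s hUs).trans_le (hdim U hU)
      exact hy _ ⟨mem_image2_of_mem hU (mem_univ s), Nat.lt_succ_iff.1 hlt⟩ x ⟨hx, hs⟩
        fun k => hzero k.succ

end LinearFamily

lemma finrank_ker_proj (F : Type*) {W ι : Type*} [Field F] [AddCommGroup W] [Module F W]
    [FiniteDimensional F W] [Fintype ι] (i : ι) :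
    finrank F (LinearMap.ker (LinearMap.proj i : (ι → W) →ₗ[F] W)) =
      finrank F W * (Fintype.card ι - 1) := by
  have hsum := (LinearMap.proj i : (ι → W) →ₗ[F] W).finrank_range_add_finrank_ker
  rw [LinearMap.range_eq_top.2 (LinearMap.proj_surjective i), finrank_top,
    finrank_pi_fintype, Finset.sum_const, Finset.card_univ, smul_eq_mul] at hsum
  rw [Nat.mul_sub_one, mul_comm]
  lia

theorem stmt_0_general {F W ι : Type*} [Field F] [Infinite F] [AddCommGroup W] [Module F W]
    [FiniteDimensional F W] [Fintype ι] [Nontrivial ι] {K : ℕ}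
    (hK : finrank F W * (Fintype.card ι - 1) ≤ K) :
    ∃ y : Fin K → Dual F W, ∀ X : ι → W, (∃ k, Injective (y k ∘ X)) ↔ Injective X := by
  obtain ⟨i₀, j₀, h₀⟩ := exists_pair_ne ι
  let S := {p : ι × ι // p.1 ≠ p.2}
  have : Nonempty S := ⟨(i₀, j₀), h₀⟩
  let π : ι → (ι → W) →ₗ[F] W := LinearMap.proj
  let L (p : S) : (ι → W) →ₗ[F] W := π p.1.1 - π p.1.2
  obtain ⟨y, hy⟩ := exists_dual_forall_mem_exists_apply_eq_zero L
    (finite_singleton (LinearMap.ker (π i₀)))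
    (forall_eq.2 ((finrank_ker_proj F i₀).trans_le hK))
  refine ⟨y, fun X => ⟨fun ⟨k, hk⟩ => hk.of_comp, fun hX => ?_⟩⟩
  by_contra! hnot
  have hzero (k : Fin K) : ∃ p : S, y k (L p (X - const ι (X i₀))) = 0 := by
    obtain ⟨i, j, hij, hne⟩ := not_injective_iff.1 (hnot k)
    exact ⟨⟨(i, j), hne⟩, by simpa [L, π, sub_eq_zero] using hij⟩
  obtain ⟨⟨⟨i, j⟩, hne⟩, hij⟩ := hy _ rfl (X - const ι (X i₀)) (by simp [π]) hzero
  exact hne (hX (by simpa [L, π, sub_eq_zero] using hij))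

lemma ftilde_eq_zero_iff {N d : ℕ} (y : Fin d → ℝ) (X : Fin N → Fin d → ℝ) :
    ftilde N d y X = 0 ↔ ¬ Injective (dotProductEquiv ℝ (Fin d) y ∘ X) := by
  have hfactor (i j : Fin N) : ∑ l, y l * (X i l - X j l) = y ⬝ᵥ X i - y ⬝ᵥ X j :=
    dotProduct_sub y (X i) (X j)
  simp only [ftilde, Finset.prod_eq_zero_iff, Finset.mem_univ, Finset.mem_Ioi, true_and, hfactor,
    sub_eq_zero]
  constructor
  · rintro ⟨i, j, hlt, hij⟩ hinj
    exact hlt.ne (hinj hij)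
  · intro hnot
    contrapose! hnot
    exact .of_lt_imp_ne hnot

lemma mem_intrinsicZero_iff {N d : ℕ} {X : Fin N → Fin d → ℝ} :
    X ∈ intrinsicZero N d ↔ ¬ Injective X := by
  simp only [intrinsicZero, mem_ofPred_eq, not_injective_iff, and_comm]

theorem stmt_0 (N d K : ℕ) (hN : 2 ≤ N) (hd : 1 ≤ d) (hK : d * N + 1 ≤ K) :
    ∃ y : Fin K → Fin d → ℝ,
      (⋂ k : Fin K, {X : Fin N → Fin d → ℝ | ftilde N d (y k) X = 0})
        = intrinsicZero N d := by
  have : Nontrivial (Fin N) := Fin.nontrivial_iff_two_le.2 hN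
  have hdim : d * (N - 1) ≤ K := (Nat.mul_le_mul_left d (N.sub_le 1)).trans (by lia)
  obtain ⟨y, hy⟩ := stmt_0_general (F := ℝ) (W := Fin d → ℝ) (ι := Fin N) (by simpa using hdim)
  exact ⟨fun k => (dotProductEquiv ℝ (Fin d)).symm (y k), Set.ext fun X => by
    simp [ftilde_eq_zero_iff, mem_intrinsicZero_iff, ← hy X]⟩
end

section
/- Fix integers N ≥ 2, d ≥ 1 and let K = dN + 1. For every anti-symmetric continuous function Ψ : (ℝ^d)^N → ℝ there exist, for each k ∈ {1, …, K} and each i ∈ {1, …, N}, functions h^k_i : (ℝ^d)^N × {1, …, N} → ℝ such that: (a) for each fixed j, the map X ↦ h^k_i(X, j) is continuous; (b) for every permutation π of {1, …, N} with π(j) = j, h^k_i((X_{π(1)}, …, X_{π(N)}), j) = h^k_i((X_1, …, X_N), j) (i.e., each entry is a symmetric function of the coordinates X_l with l ≠ j); and (c) Ψ(X) = ∑_{k=1}^{K} det M^k(X), where M^k(X) is the N×N matrix with (j, i)-entry h^k_i(X, j). -/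
/-- `Ψ` is anti-symmetric. -/
def IsAntisym (N d : ℕ) (Ψ : (Fin N → Fin d → ℝ) → ℝ) : Prop :=
  ∀ (π : Equiv.Perm (Fin N)) (X : Fin N → Fin d → ℝ),
    Ψ (fun i => X (π i)) = ((Equiv.Perm.sign π : ℤ) : ℝ) * Ψ X

/-!
If the support of `f` meets every permutation orbit of configurations at most once, the matrix with
entries `∑ σ with σ i = j, r i (f (X ∘ σ))`, where `∏ i, r i t = t`, is a scaled permutation matrix
with determinant `∑ σ, sign σ * f (X ∘ σ)`. So it is enough to write `Ψ` as a sum of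
antisymmetrizations of such functions, and for this it is enough to find nonnegative continuous
weights `w k`, each with such a support, whose sum is positive somewhere on the orbit of every
configuration of distinct points: take `f k = (w k / W) * Ψ`, where `W` is the symmetrization of
`∑ k, w k`. It is continuous even where `W = 0`, since `Ψ` vanishes there and `|f k| ≤ |Ψ|`.

The weights come from the order patterns `{(m, i, j) | X_i^m < X_j^m}`. A pattern `S` gets a bump
that is positive at `X` exactly when `S` is a superlevel set of `(m, i, j) ↦ X_j^m - X_i^m`. The
superlevel sets of a function form a chain, and along a strict inclusion of patterns the number of
distinct values, summed over the `d` coordinates, strictly increases. So patterns with the same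
number of values have disjoint bumps. That number runs through `d, …, d * N`, which gives
`d * (N - 1) + 1` weights; using only the patterns of lexicographically increasing configurations
singles out one pattern in each orbit.
-/

open Finset Equiv

section Superlevel

variable {α : Type*} [Fintype α] [DecidableEq α]

/-- A continuous function of `v` which is positive when `S` is a superlevel set of `v`, and zero
otherwise. -/
noncomputable def superlevelBump (S : Finset α) (v : α → ℝ) : ℝ :=
  ∏ a ∈ S, ∏ b ∈ Sᶜ, max 0 (v a - v b)

lemma continuous_superlevelBump (S : Finset α) : Continuous (superlevelBump S) := by
  unfold superlevelBump
  fun_prop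

lemma superlevelBump_nonneg (S : Finset α) (v : α → ℝ) : 0 ≤ superlevelBump S v :=
  prod_nonneg fun _ _ => prod_nonneg fun _ _ => le_max_left _ _

lemma superlevelBump_pos_iff {S : Finset α} {v : α → ℝ} :
    0 < superlevelBump S v ↔ ∀ a ∈ S, ∀ b ∉ S, v b < v a := by
  rw [(superlevelBump_nonneg S v).lt_iff_ne']
  simp only [superlevelBump, prod_ne_zero_iff, mem_compl, ne_eq, max_eq_left_iff, sub_nonpos,
    not_le]

lemma subset_or_subset_of_superlevelBump_pos {S T : Finset α} {v : α → ℝ}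
    (hS : 0 < superlevelBump S v) (hT : 0 < superlevelBump T v) : S ⊆ T ∨ T ⊆ S := by
  by_contra! h
  obtain ⟨⟨a, haS, haT⟩, b, hbT, hbS⟩ := h.imp not_subset.1 not_subset.1
  exact (superlevelBump_pos_iff.1 hS a haS b hbS).asymm (superlevelBump_pos_iff.1 hT b hbT a haT)

end Superlevel

section Range

variable {ι β γ : Type*} [Finite ι] {f : ι → β} {g : ι → γ}

lemma ncard_range_le_of_factorsThrough (h : f.FactorsThrough g) :
    (Set.range f).ncard ≤ (Set.range g).ncard := by
  rcases isEmpty_or_nonempty ι with _ | ⟨⟨i⟩⟩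
  · simp [Set.range_eq_empty]
  have : Nonempty β := ⟨f i⟩
  obtain ⟨e, rfl⟩ := (Function.factorsThrough_iff f).1 h
  rw [Set.range_comp]
  exact Set.ncard_image_le

lemma factorsThrough_of_ncard_range_eq (h : f.FactorsThrough g)
    (hcard : (Set.range f).ncard = (Set.range g).ncard) : g.FactorsThrough f := by
  intro i j hij
  have : Nonempty β := ⟨f i⟩
  obtain ⟨e, rfl⟩ := (Function.factorsThrough_iff f).1 h
  rw [Set.range_comp] at hcard
  exact (Set.ncard_image_iff (Set.toFinite _)).1 hcard ⟨i, rfl⟩ ⟨j, rfl⟩ hij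

end Range

section Pattern

variable {ι κ β : Type*}

/-- The differences `x_j^m - x_i^m`, indexed by the triples `(m, i, j)`. -/
def coordDiff (x : ι → κ → ℝ) (a : κ × ι × ι) : ℝ :=
  x a.2.2 a.1 - x a.2.1 a.1

lemma continuous_coordDiff : Continuous (coordDiff : (ι → κ → ℝ) → κ × ι × ι → ℝ) := by
  unfold coordDiff
  fun_prop

variable [Fintype κ]

/-- The number of distinct values of each coordinate, summed over the coordinates. For real `x` it
is the dimension of the face containing `x` of the arrangement of hyperplanes `x_i^m = x_j^m`. -/
noncomputable def numValues (x : ι → κ → β) : ℕ :=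
  ∑ m, (Set.range fun i => x i m).ncard

lemma numValues_comp_perm (x : ι → κ → β) (σ : Perm ι) : numValues (x ∘ σ) = numValues x :=
  sum_congr rfl fun m _ => congrArg Set.ncard (σ.surjective.range_comp fun i => x i m)

lemma card_le_numValues [Finite ι] [Nonempty ι] (x : ι → κ → β) : Fintype.card κ ≤ numValues x := by
  have hm (m : κ) : 1 ≤ (Set.range fun i => x i m).ncard :=
    (Set.ncard_pos (Set.toFinite _)).2 (Set.range_nonempty _)
  simpa [numValues] using sum_le_sum fun m (_ : m ∈ univ) => hm m

variable [Fintype ι]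

lemma numValues_le (x : ι → κ → β) : numValues x ≤ Fintype.card κ * Fintype.card ι := by
  have hm (m : κ) : (Set.range fun i => x i m).ncard ≤ Fintype.card ι := by
    simpa using ncard_range_le_of_factorsThrough
      (Function.injective_id.factorsThrough fun i => x i m)
  simpa [numValues] using sum_le_card_nsmul univ _ _ fun m _ => hm m

open Classical in
/-- The order pattern of `x`: the triples `(m, i, j)` with `x_i^m < x_j^m`. -/
noncomputable def orderPattern [LinearOrder β] (x : ι → κ → β) : Finset (κ × ι × ι) :=
  {a | x a.2.1 a.1 < x a.2.2 a.1}

lemma mem_orderPattern [LinearOrder β] {x : ι → κ → β} {a : κ × ι × ι} :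
    a ∈ orderPattern x ↔ x a.2.1 a.1 < x a.2.2 a.1 := by
  simp [orderPattern]

lemma orderPattern_eq_of_subset [LinearOrder β] {y z : ι → κ → β}
    (h : orderPattern y ⊆ orderPattern z) (hcard : numValues y = numValues z) :
    orderPattern y = orderPattern z := by
  have hlt {m i j} (hij : y i m < y j m) : z i m < z j m :=
    mem_orderPattern.1 (@h (m, i, j) (mem_orderPattern.2 hij))
  have hfactors (m) : (fun i => y i m).FactorsThrough fun i => z i m := by
    intro i j hij
    by_contra hne
    rcases lt_or_gt_of_ne hne with hlt' | hgt
    · exact (hlt hlt').ne hij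
    · exact (hlt hgt).ne' hij
  have heq (m) : (Set.range fun i => y i m).ncard = (Set.range fun i => z i m).ncard :=
    (sum_eq_sum_iff_of_le fun m _ => ncard_range_le_of_factorsThrough (hfactors m)).1 hcard m
      (mem_univ m)
  refine h.antisymm fun ⟨m, i, j⟩ hij => ?_
  rw [mem_orderPattern] at hij ⊢
  rcases lt_trichotomy (y i m) (y j m) with hy | hy | hy
  · exact hy
  · exact absurd (factorsThrough_of_ncard_range_eq (hfactors m) (heq m) hy) hij.ne
  · exact absurd (hlt hy) hij.asymm

variable [DecidableEq ι] [DecidableEq κ]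

lemma superlevelBump_orderPattern_self_pos (x : ι → κ → ℝ) :
    0 < superlevelBump (orderPattern x) (coordDiff x) := by
  refine superlevelBump_pos_iff.2 fun a ha b hb => ?_
  rw [mem_orderPattern] at ha hb
  unfold coordDiff
  linarith

lemma superlevelBump_orderPattern_comp_symm_pos {x y : ι → κ → ℝ} {σ : Perm ι}
    (h : 0 < superlevelBump (orderPattern y) (coordDiff (x ∘ σ))) :
    0 < superlevelBump (orderPattern (y ∘ σ.symm)) (coordDiff x) := by
  rw [superlevelBump_pos_iff] at h ⊢
  rintro ⟨m, i, j⟩ ha ⟨m', i', j'⟩ hb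
  simp only [mem_orderPattern, Function.comp_apply] at ha hb
  simpa [coordDiff] using h (m, σ.symm i, σ.symm j) (mem_orderPattern.2 ha)
    (m', σ.symm i', σ.symm j') (mt mem_orderPattern.1 hb)

lemma orderPattern_eq_of_superlevelBump_pos {x y z : ι → κ → ℝ} (hcard : numValues y = numValues z)
    (hy : 0 < superlevelBump (orderPattern y) (coordDiff x))
    (hz : 0 < superlevelBump (orderPattern z) (coordDiff x)) : orderPattern y = orderPattern z :=
  (subset_or_subset_of_superlevelBump_pos hy hz).elim (orderPattern_eq_of_subset · hcard)
    fun h => (orderPattern_eq_of_subset h hcard.symm).symm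

end Pattern

section SortTuple

variable {N : ℕ} {β : Type*}

lemma exists_perm_strictMono_comp [LinearOrder β] {f : Fin N → β} (hf : f.Injective) :
    ∃ σ : Perm (Fin N), StrictMono (f ∘ σ) :=
  ⟨Tuple.sort f,
    (Tuple.monotone_sort f).strictMono_of_injective (hf.comp (Equiv.injective _))⟩

lemma eq_one_of_strictMono_comp_perm [PartialOrder β] {f : Fin N → β} {σ : Perm (Fin N)}
    (hf : StrictMono f) (hσ : StrictMono (f ∘ σ)) : σ = 1 := by
  have hcomp : f ∘ σ = f ∘ (1 : Perm (Fin N)) := Tuple.unique_monotone hσ.monotone hf.monotone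
  exact Equiv.ext fun i => hf.injective (congrFun hcomp i)

end SortTuple

section PatternWeight

variable {κ : Type*} [Fintype κ] [LinearOrder κ]

lemma strictMono_toLex_of_orderPattern_eq {ι β : Type*} [Fintype ι] [Preorder ι] [LinearOrder β]
    {y z : ι → κ → β} (h : orderPattern y = orderPattern z) (hy : StrictMono (toLex ∘ y)) :
    StrictMono (toLex ∘ z) := by
  have hlt (m i j) : y i m < y j m ↔ z i m < z j m := by
    simpa only [mem_orderPattern] using Finset.ext_iff.1 h (m, i, j)
  intro i j hij
  obtain ⟨m, heq, hm⟩ := hy hij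
  refine ⟨m, fun l hl => ?_, (hlt m i j).1 hm⟩
  have hyl : y i l = y j l := heq l hl
  exact eq_of_le_of_not_lt (not_lt.1 fun hc => ((hlt l j i).2 hc).ne' hyl)
    fun hc => ((hlt l i j).2 hc).ne hyl

variable {N : ℕ}

/-- The patterns of the lexicographically increasing configurations with `Fintype.card κ + k`
coordinate values. The shift makes the possible values of `k` start at `0`. -/
noncomputable def lexPatterns (N : ℕ) (κ : Type*) [Fintype κ] [LinearOrder κ] (k : ℕ) :
    Finset (Finset (κ × Fin N × Fin N)) :=
  (Set.toFinite (orderPattern '' {y : Fin N → κ → ℝ |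
    StrictMono (toLex ∘ y) ∧ numValues y = Fintype.card κ + k})).toFinset

lemma mem_lexPatterns {k : ℕ} {S : Finset (κ × Fin N × Fin N)} :
    S ∈ lexPatterns N κ k ↔ ∃ y : Fin N → κ → ℝ,
      (StrictMono (toLex ∘ y) ∧ numValues y = Fintype.card κ + k) ∧ orderPattern y = S := by
  simp only [lexPatterns, Set.Finite.mem_toFinset, Set.mem_image, Set.mem_ofPred_eq]

/-- The total bump of the patterns in `lexPatterns N κ k`. -/
noncomputable def patternWeight (k : ℕ) (x : Fin N → κ → ℝ) : ℝ :=
  ∑ S ∈ lexPatterns N κ k, superlevelBump S (coordDiff x)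

lemma continuous_patternWeight (k : ℕ) :
    Continuous (patternWeight k : (Fin N → κ → ℝ) → ℝ) :=
  continuous_finsetSum _ fun S _ => (continuous_superlevelBump S).comp continuous_coordDiff

lemma patternWeight_nonneg (k : ℕ) (x : Fin N → κ → ℝ) : 0 ≤ patternWeight k x :=
  sum_nonneg fun S _ => superlevelBump_nonneg S _

lemma patternWeight_pos_iff {k : ℕ} {x : Fin N → κ → ℝ} :
    0 < patternWeight k x ↔ ∃ y : Fin N → κ → ℝ, StrictMono (toLex ∘ y) ∧
      numValues y = Fintype.card κ + k ∧ 0 < superlevelBump (orderPattern y) (coordDiff x) := by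
  rw [patternWeight, sum_pos_iff_of_nonneg fun S _ => superlevelBump_nonneg S _]
  simp only [mem_lexPatterns, ↓existsAndEq, and_true, and_assoc]

lemma eq_one_of_patternWeight_pos {k : ℕ} {x : Fin N → κ → ℝ} {σ : Perm (Fin N)}
    (hx : 0 < patternWeight k x) (hσ : 0 < patternWeight k (x ∘ σ)) : σ = 1 := by
  obtain ⟨y, hy, hyk, hyx⟩ := patternWeight_pos_iff.1 hx
  obtain ⟨z, hz, hzk, hzx⟩ := patternWeight_pos_iff.1 hσ
  have hpattern : orderPattern y = orderPattern (z ∘ σ.symm) :=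
    orderPattern_eq_of_superlevelBump_pos (by rw [numValues_comp_perm, hyk, hzk]) hyx
      (superlevelBump_orderPattern_comp_symm_pos hzx)
  have hsymm : σ.symm = 1 :=
    eq_one_of_strictMono_comp_perm hz (strictMono_toLex_of_orderPattern_eq hpattern hy)
  exact inv_eq_one.1 hsymm

lemma eq_of_patternWeight_comp_pos {k : ℕ} {x : Fin N → κ → ℝ} {σ τ : Perm (Fin N)}
    (hσ : 0 < patternWeight k (x ∘ σ)) (hτ : 0 < patternWeight k (x ∘ τ)) : σ = τ := by
  have hcomp : x ∘ τ = (x ∘ σ) ∘ ⇑(σ⁻¹ * τ) := by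
    ext i
    simp
  rw [hcomp] at hτ
  exact inv_mul_eq_one.1 (eq_one_of_patternWeight_pos hσ hτ)

lemma exists_patternWeight_comp_pos (hN : N ≠ 0) {x : Fin N → κ → ℝ} (hx : x.Injective) :
    ∃ k ≤ Fintype.card κ * (N - 1), ∃ σ : Perm (Fin N), 0 < patternWeight k (x ∘ σ) := by
  have : NeZero N := ⟨hN⟩
  obtain ⟨σ, hσ⟩ := exists_perm_strictMono_comp (toLex.injective.comp hx)
  obtain ⟨k, hk⟩ := Nat.exists_eq_add_of_le (card_le_numValues (x ∘ σ))
  have hle := numValues_le (x ∘ σ)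
  rw [Fintype.card_fin] at hle
  refine ⟨k, ?_, σ, patternWeight_pos_iff.2 ⟨_, hσ, hk, superlevelBump_orderPattern_self_pos _⟩⟩
  rw [Nat.mul_sub_one]
  lia

end PatternWeight

section Analysis

lemma continuous_div_smul_of_le {X F : Type*} [TopologicalSpace X] [NormedAddCommGroup F]
    [NormedSpace ℝ F] {a b : X → ℝ} {f : X → F} (ha : Continuous a) (hb : Continuous b)
    (hf : Continuous f) (ha_nonneg : ∀ x, 0 ≤ a x) (hab : ∀ x, a x ≤ b x)
    (hzero : ∀ x, b x = 0 → f x = 0) : Continuous fun x => (a x / b x) • f x := by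
  refine continuous_iff_continuousAt.2 fun x => ?_
  by_cases hx : b x = 0
  · have hbound (z) : ‖(a z / b z) • f z‖ ≤ ‖f z‖ := by
      have hb_nonneg := (ha_nonneg z).trans (hab z)
      rw [norm_smul, Real.norm_of_nonneg (div_nonneg (ha_nonneg z) hb_nonneg)]
      exact mul_le_of_le_one_left (norm_nonneg _) (div_le_one_of_le₀ (hab z) hb_nonneg)
    have hlim : Filter.Tendsto (fun z => ‖f z‖) (nhds x) (nhds 0) := by
      simpa [hzero x hx] using hf.norm.tendsto x
    simpa [ContinuousAt, hx] using squeeze_zero_norm hbound hlim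
  · exact (ha.continuousAt.div hb.continuousAt hx).smul hf.continuousAt

lemma continuous_norm_rpow_smul {F : Type*} [NormedAddCommGroup F] [NormedSpace ℝ F] {s : ℝ}
    (hs : -1 < s) : Continuous fun x : F => ‖x‖ ^ s • x := by
  have hs' : 0 < s + 1 := by linarith
  refine continuous_iff_continuousAt.2 fun x => ?_
  rcases eq_or_ne x 0 with rfl | hx
  · have hnorm (z : F) : ‖‖z‖ ^ s • z‖ = ‖z‖ ^ (s + 1) := by
      rw [norm_smul, Real.norm_of_nonneg (by positivity),
        Real.rpow_add_one' (norm_nonneg z) hs'.ne']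
    have hlim : Filter.Tendsto (fun z : F => ‖z‖ ^ (s + 1)) (nhds 0) (nhds 0) := by
      simpa [hs'.ne'] using (continuous_norm.rpow_const fun _ => Or.inr hs'.le).tendsto (0 : F)
    simpa [ContinuousAt] using squeeze_zero_norm (fun z => (hnorm z).le) hlim
  · exact (continuousAt_id.norm.rpow_const (Or.inl (norm_ne_zero_iff.2 hx))).smul continuousAt_id

/-- The factors are continuous `n`-th roots, `n = Fintype.card ι`, of which one carries the phase of
`t`. -/
lemma exists_continuous_prod_eq (ι 𝕜 : Type*) [Fintype ι] [Nonempty ι] [RCLike 𝕜] :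
    ∃ r : ι → 𝕜 → 𝕜, (∀ i, Continuous (r i)) ∧ (∀ i, r i 0 = 0) ∧ ∀ t, ∏ i, r i t = t := by
  classical
  obtain ⟨i₀⟩ := ‹Nonempty ι›
  set s : ℝ := (Fintype.card ι : ℝ)⁻¹
  have hs : 0 < s := by positivity
  have hroot : Continuous fun t : 𝕜 => ‖t‖ ^ s := continuous_norm.rpow_const fun _ => Or.inr hs.le
  refine ⟨fun i t => if i = i₀ then ‖t‖ ^ (s - 1) • t else ((‖t‖ ^ s : ℝ) : 𝕜),
    fun i => ?_, fun i => by simp [hs.ne'], fun t => ?_⟩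
  · rcases eq_or_ne i i₀ with rfl | hi
    · simpa using continuous_norm_rpow_smul (F := 𝕜) (by linarith : -1 < s - 1)
    · simpa only [if_neg hi] using (RCLike.continuous_ofReal (K := 𝕜)).comp' hroot
  · calc ∏ i, (if i = i₀ then ‖t‖ ^ (s - 1) • t else ((‖t‖ ^ s : ℝ) : 𝕜))
        = ∏ i, ((‖t‖ ^ s : ℝ) : 𝕜) * (if i = i₀ then ‖t‖⁻¹ • t else 1) := by
          refine prod_congr rfl fun i _ => ?_
          rcases eq_or_ne t 0 with rfl | ht
          · simp [hs.ne']
          · split_ifs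
            · rw [Real.rpow_sub_one (norm_ne_zero_iff.2 ht), div_eq_mul_inv, mul_smul,
                RCLike.real_smul_eq_coe_mul (‖t‖ ^ s)]
            · rw [mul_one]
      _ = (((‖t‖ ^ s) ^ Fintype.card ι : ℝ) : 𝕜) * (‖t‖⁻¹ • t) := by
          rw [prod_mul_distrib, prod_const, card_univ, prod_ite_eq' univ, if_pos (mem_univ i₀),
            RCLike.ofReal_pow]
      _ = ‖t‖ • ‖t‖⁻¹ • t := by
          rw [Real.rpow_inv_natCast_pow (norm_nonneg t) Fintype.card_ne_zero,
            RCLike.real_smul_eq_coe_mul ‖t‖]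
      _ = t := by
          rcases eq_or_ne t 0 with rfl | ht
          · simp
          · exact smul_inv_smul₀ (norm_ne_zero_iff.2 ht) t

end Analysis

section Slater

variable {ι E R : Type*} [Fintype ι] [DecidableEq ι]

/-- The `(j, i)` entry of the generalized Slater determinant built from the functions `g i`: the
symmetrization of `g i` over the permutations of the points that put `X j` in position `i`. -/
def slaterEntry [AddCommMonoid R] (g : ι → (ι → E) → R) (i : ι) (X : ι → E) (j : ι) : R :=
  ∑ σ : Perm ι with σ i = j, g i (X ∘ σ)

lemma continuous_slaterEntry [TopologicalSpace E] [AddCommMonoid R] [TopologicalSpace R]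
    [ContinuousAdd R] {g : ι → (ι → E) → R} {i : ι} (hg : Continuous (g i)) (j : ι) :
    Continuous fun X => slaterEntry g i X j :=
  continuous_finsetSum _ fun σ _ => hg.comp (Pi.continuous_precomp σ)

lemma slaterEntry_comp_perm [AddCommMonoid R] (g : ι → (ι → E) → R) (i : ι) {j : ι}
    {π : Perm ι} (hπ : π j = j) (X : ι → E) :
    slaterEntry g i (X ∘ π) j = slaterEntry g i X j := by
  refine sum_equiv (Equiv.mulLeft π) (fun σ => ?_) fun σ _ => rfl
  simp only [mem_filter_univ, Equiv.coe_mulLeft, Perm.mul_apply]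
  rw [← π.apply_eq_iff_eq, hπ]

lemma det_slaterEntry [CommRing R] {g : ι → (ι → E) → R} {X : ι → E} {σ : Perm ι}
    (hσ : ∀ τ ≠ σ, ∀ i, g i (X ∘ τ) = 0) :
    Matrix.det (Matrix.of fun j i => slaterEntry g i X j) =
      ((Perm.sign σ : ℤ) : R) * ∏ i, g i (X ∘ σ) := by
  have hentry (i j : ι) : slaterEntry g i X j = if σ i = j then g i (X ∘ σ) else 0 := by
    rw [slaterEntry, sum_filter]
    exact Fintype.sum_eq_single σ fun τ hτ => by rw [hσ τ hτ, ite_self]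
  have hmatrix : (Matrix.of fun j i => slaterEntry g i X j) =
      (Matrix.diagonal fun i => g i (X ∘ σ)).submatrix σ.symm id := by
    ext j i
    by_cases hij : σ i = j
    · simp [hentry, ← hij]
    · have hji : σ.symm j ≠ i := fun h => hij (by simp [← h])
      simp [hentry, hij, hji]
  rw [hmatrix, Matrix.det_permute, Matrix.det_diagonal, Perm.sign_symm]

lemma det_slaterEntry_of_prod [CommRing R] {r : ι → R → R} (hr_zero : ∀ i, r i 0 = 0)
    (hr_prod : ∀ t, ∏ i, r i t = t) {f : (ι → E) → R} {X : ι → E}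
    (hf : {σ : Perm ι | f (X ∘ σ) ≠ 0}.Subsingleton) :
    Matrix.det (Matrix.of fun j i => slaterEntry (fun i Y => r i (f Y)) i X j) =
      ∑ σ : Perm ι, ((Perm.sign σ : ℤ) : R) * f (X ∘ σ) := by
  obtain ⟨σ, hσ⟩ : ∃ σ : Perm ι, ∀ τ ≠ σ, f (X ∘ τ) = 0 := by
    by_cases h : ∃ σ : Perm ι, f (X ∘ σ) ≠ 0
    · obtain ⟨σ, hσ⟩ := h
      exact ⟨σ, fun τ hτ => of_not_not fun hne => hτ (hf hne hσ)⟩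
    · push Not at h
      exact ⟨1, fun τ _ => h τ⟩
  rw [det_slaterEntry (σ := σ) fun τ hτ i => by rw [hσ τ hτ, hr_zero], hr_prod]
  symm
  exact Fintype.sum_eq_single σ fun τ hτ => by rw [hσ τ hτ, mul_zero]

end Slater

section OrbitSum

variable {ι κ E F A : Type*} [Fintype ι] [DecidableEq ι] [Fintype κ]

/-- The symmetrization over the permutations of the points of the sum of the weights `w k`. -/
noncomputable def orbitSum (w : κ → (ι → E) → ℝ) (X : ι → E) : ℝ :=
  ∑ k, ∑ σ : Perm ι, w k (X ∘ σ)

lemma orbitSum_comp_perm (w : κ → (ι → E) → ℝ) (X : ι → E) (π : Perm ι) :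
    orbitSum w (X ∘ π) = orbitSum w X :=
  sum_congr rfl fun k _ => Equiv.sum_comp (Equiv.mulLeft π) fun σ => w k (X ∘ σ)

lemma continuous_orbitSum [TopologicalSpace E] {w : κ → (ι → E) → ℝ}
    (hw : ∀ k, Continuous (w k)) : Continuous (orbitSum w) :=
  continuous_finsetSum _ fun k _ => continuous_finsetSum _ fun σ _ =>
    (hw k).comp (Pi.continuous_precomp σ)

lemma le_orbitSum {w : κ → (ι → E) → ℝ} (hw : ∀ k X, 0 ≤ w k X) (k : κ) (X : ι → E)
    (σ : Perm ι) : w k (X ∘ σ) ≤ orbitSum w X :=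
  calc w k (X ∘ σ) ≤ ∑ τ : Perm ι, w k (X ∘ τ) :=
        single_le_sum (f := fun τ : Perm ι => w k (X ∘ τ)) (fun _ _ => hw k _) (mem_univ σ)
    _ ≤ orbitSum w X :=
        single_le_sum (f := fun k => ∑ τ : Perm ι, w k (X ∘ τ))
          (fun k _ => sum_nonneg fun _ _ => hw k _) (mem_univ k)

/-- The share of `Ψ` carried by the weight `w k`. Where `orbitSum w` vanishes it is `0`, as
`x / 0 = 0`. -/
noncomputable def weightShare [AddCommMonoid F] [Module ℝ F] (w : κ → (ι → E) → ℝ)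
    (Ψ : (ι → E) → F) (k : κ) (X : ι → E) : F :=
  (w k X / orbitSum w X) • Ψ X

lemma continuous_weightShare [TopologicalSpace E] [NormedAddCommGroup F] [NormedSpace ℝ F]
    {w : κ → (ι → E) → ℝ} {Ψ : (ι → E) → F}
    (hw : ∀ k, Continuous (w k)) (hw_nonneg : ∀ k X, 0 ≤ w k X) (hΨ : Continuous Ψ)
    (hzero : ∀ X, orbitSum w X = 0 → Ψ X = 0) (k : κ) : Continuous (weightShare w Ψ k) :=
  continuous_div_smul_of_le (hw k) (continuous_orbitSum hw) hΨ (hw_nonneg k)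
    (fun X => le_orbitSum hw_nonneg k X 1) hzero

lemma weight_ne_zero_of_weightShare_ne_zero [AddCommMonoid F] [Module ℝ F]
    {w : κ → (ι → E) → ℝ} {Ψ : (ι → E) → F} {k : κ} {X : ι → E} (h : weightShare w Ψ k X ≠ 0) :
    w k X ≠ 0 :=
  fun hw => h (by simp [weightShare, hw])

lemma eq_zero_of_not_injective [Ring A] [IsAddTorsionFree A] {Ψ : (ι → E) → A}
    (hΨ : ∀ (π : Perm ι) X, Ψ (X ∘ π) = ((Perm.sign π : ℤ) : A) * Ψ X) {X : ι → E}
    (hX : ¬ X.Injective) : Ψ X = 0 := by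
  obtain ⟨i, j, hij, hne⟩ := Function.not_injective_iff.1 hX
  have hswap : X ∘ swap i j = X := funext (apply_swap_eq_self hij)
  have hneg := hΨ (swap i j) X
  rw [hswap, Perm.sign_swap hne] at hneg
  exact self_eq_neg.1 (by simpa using hneg)

lemma sum_sum_sign_mul_weightShare [Ring A] [Algebra ℝ A] {w : κ → (ι → E) → ℝ}
    {Ψ : (ι → E) → A}
    (hΨ : ∀ (π : Perm ι) X, Ψ (X ∘ π) = ((Perm.sign π : ℤ) : A) * Ψ X) {X : ι → E}
    (hzero : orbitSum w X = 0 → Ψ X = 0) :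
    ∑ k, ∑ σ : Perm ι, ((Perm.sign σ : ℤ) : A) * weightShare w Ψ k (X ∘ σ) = Ψ X := by
  have hterm (k) (σ : Perm ι) : ((Perm.sign σ : ℤ) : A) * weightShare w Ψ k (X ∘ σ) =
      (w k (X ∘ σ) / orbitSum w X) • Ψ X := by
    have hsign : ((Perm.sign σ : ℤ) : A) * ((Perm.sign σ : ℤ) : A) = 1 := by
      rw [← Int.cast_mul, Int.units_coe_mul_self, Int.cast_one]
    rw [weightShare, hΨ, orbitSum_comp_perm, mul_smul_comm, ← mul_assoc, hsign, one_mul]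
  calc ∑ k, ∑ σ : Perm ι, ((Perm.sign σ : ℤ) : A) * weightShare w Ψ k (X ∘ σ)
      = (orbitSum w X / orbitSum w X) • Ψ X := by
        simp only [hterm, ← sum_smul, ← sum_div]
        rfl
    _ = Ψ X := by
        by_cases hX : orbitSum w X = 0
        · rw [hzero hX, smul_zero]
        · rw [div_self hX, one_smul]

end OrbitSum

theorem stmt_4_general {𝕜 E : Type*} [RCLike 𝕜] [TopologicalSpace E] {N d K : ℕ} (hN : N ≠ 0)
    (hK : d * (N - 1) < K) {c : E → Fin d → ℝ} (hc : Continuous c) (hc_inj : c.Injective)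
    {Ψ : (Fin N → E) → 𝕜} (hΨ : Continuous Ψ)
    (hΨ_anti : ∀ (π : Perm (Fin N)) (X : Fin N → E),
      Ψ (X ∘ π) = ((Perm.sign π : ℤ) : 𝕜) * Ψ X) :
    ∃ h : Fin K → Fin N → (Fin N → E) → Fin N → 𝕜,
      (∀ k i j, Continuous fun X => h k i X j) ∧
      (∀ k i j (π : Perm (Fin N)), π j = j → ∀ X, h k i (X ∘ π) j = h k i X j) ∧
      ∀ X, Ψ X = ∑ k, Matrix.det (Matrix.of fun j i => h k i X j) := by
  have : NeZero N := ⟨hN⟩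
  obtain ⟨r, hr, hr_zero, hr_prod⟩ := exists_continuous_prod_eq (Fin N) 𝕜
  let w (k : Fin K) (X : Fin N → E) : ℝ := patternWeight k (c ∘ X)
  have hw (k) : Continuous (w k) := (continuous_patternWeight k).comp (Pi.continuous_postcomp hc)
  have hw_nonneg (k X) : 0 ≤ w k X := patternWeight_nonneg k _
  have hzero (X) (hX : orbitSum w X = 0) : Ψ X = 0 := by
    refine eq_zero_of_not_injective hΨ_anti fun hinj => ?_
    obtain ⟨k, hk, σ, hpos⟩ := exists_patternWeight_comp_pos hN (hc_inj.comp hinj)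
    rw [Fintype.card_fin] at hk
    exact (hpos.trans_le (le_orbitSum hw_nonneg ⟨k, hk.trans_lt hK⟩ X σ)).ne' hX
  have hpos {k X} (hX : weightShare w Ψ k X ≠ 0) : 0 < w k X :=
    (hw_nonneg k X).lt_of_ne' (weight_ne_zero_of_weightShare_ne_zero hX)
  have hsupport (k X) : {σ : Perm (Fin N) | weightShare w Ψ k (X ∘ σ) ≠ 0}.Subsingleton :=
    fun _ hσ _ hτ => eq_of_patternWeight_comp_pos (x := c ∘ X) (hpos hσ) (hpos hτ)
  refine ⟨fun k => slaterEntry fun i Y => r i (weightShare w Ψ k Y), fun k i j => ?_,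
    fun k i j π hπ => slaterEntry_comp_perm _ i hπ, fun X => ?_⟩
  · exact continuous_slaterEntry ((hr i).comp (continuous_weightShare hw hw_nonneg hΨ hzero k)) j
  · simp only [det_slaterEntry_of_prod hr_zero hr_prod (hsupport _ X)]
    exact (sum_sum_sign_mul_weightShare hΨ_anti (hzero X)).symm

theorem stmt_4 (N d : ℕ) (hN : 2 ≤ N) (hd : 1 ≤ d) (K : ℕ) (hK : K = d * N + 1)
    (Ψ : (Fin N → Fin d → ℝ) → ℝ) (hΨcont : Continuous Ψ) (hΨanti : IsAntisym N d Ψ) :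
    ∃ h : Fin K → Fin N → (Fin N → Fin d → ℝ) → Fin N → ℝ,
      -- (a) each entry is continuous in `X`
      (∀ k i j, Continuous (fun X => h k i X j)) ∧
      -- (b) each entry, as a function of `X`, is symmetric in the coordinates `X_l`, `l ≠ j`
      (∀ k i j (π : Equiv.Perm (Fin N)), π j = j →
        ∀ X : Fin N → Fin d → ℝ, h k i (fun m => X (π m)) j = h k i X j) ∧
      -- (c) `Ψ` is the sum of the `K` generalized Slater determinants
      (∀ X : Fin N → Fin d → ℝ,
        Ψ X = ∑ k : Fin K, Matrix.det (Matrix.of fun j i : Fin N => h k i X j)) :=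
  stmt_4_general (by lia) (by rw [hK, Nat.mul_sub_one]; lia) continuous_id
    Function.injective_id hΨcont hΨanti
end
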